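/- Let M : [0,∞) → [2,∞) be a continuous increasing function and set R(t) = w_{M,log}(t). Then for all real α > 0 and β > 1, the integral ∫_0^∞ R(t)^{−α} M(R(t))^{−β} dt is finite. -/

import Mathlib

/-!
Every `t ≥ T := M_log(1)` is of the form `t = M_log(s)` with `s ≥ 1` (`exists_Mlog_eq`), so that
`R(t) = s`. Since logarithms grow slower than any power, `M_log(s) ≤ ε⁻¹ M(s) (4 M(s) s)^ε` for
every `ε > 0`. With `η = min α ((β - 1) / 2)`, `γ = β - η > 1` and `ε = η / γ`, raising this to the
power `γ` gives `t ^ γ ≤ K M(s) ^ β s ^ α` (`Mlog_rpow_le`). Hence the integrand is at most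
`K t ^ (-γ)` on `[T, ∞)`, which is integrable because `γ > 1`, while on `[0, T)` the integrand is
constant.
-/

open MeasureTheory Set Filter
open scoped ENNReal

/-- `M_log(s) = M(s)[log(1+M(s)) + log(1+s)]`. -/
noncomputable def Mlog (M : ℝ → ℝ) (s : ℝ) : ℝ :=
  M s * (Real.log (1 + M s) + Real.log (1 + s))

/-- The weight `w_{M,log}`: it equals `M_log^{−1}(t)` for `t ≥ M_log(1)` and `1` for
`0 ≤ t ≤ M_log(1)`; here `Minv` denotes the inverse function of `M_log`. -/
noncomputable def wMlog (M Minv : ℝ → ℝ) (t : ℝ) : ℝ :=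
  if Mlog M 1 ≤ t then Minv t else 1

lemma Mlog_one_pos (M : ℝ → ℝ) (hM2 : ∀ s : ℝ, 0 ≤ s → 2 ≤ M s) : 0 < Mlog M 1 := by
  have h := hM2 1 zero_le_one
  have h1 : 0 < Real.log (1 + M 1) := Real.log_pos (by linarith)
  have h2 : 0 < Real.log (1 + (1 : ℝ)) := Real.log_pos (by norm_num)
  unfold Mlog
  positivity

/-- `M_log` maps `[1, ∞)` onto `[M_log(1), ∞)`, by the intermediate value theorem. -/
lemma exists_Mlog_eq (M : ℝ → ℝ) (hM2 : ∀ s : ℝ, 0 ≤ s → 2 ≤ M s)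
    (hMcont : ContinuousOn M (Ici 0)) (t : ℝ) (ht : Mlog M 1 ≤ t) :
    ∃ s : ℝ, 1 ≤ s ∧ Mlog M s = t := by
  have ht0 : 0 < t := (Mlog_one_pos M hM2).trans_le ht
  have hb : (1 : ℝ) ≤ Real.exp t := Real.one_le_exp ht0.le
  have hc : ContinuousOn (Mlog M) (Icc 1 (Real.exp t)) := by
    have hM : ContinuousOn M (Icc 1 (Real.exp t)) :=
      hMcont.mono fun x hx => zero_le_one.trans hx.1
    refine hM.mul (ContinuousOn.add ?_ ?_)
    · refine (continuousOn_const.add hM).log fun x hx => ?_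
      have := hM2 x (zero_le_one.trans hx.1)
      change 1 + M x ≠ 0
      linarith
    · refine (continuousOn_const.add continuousOn_id).log fun x hx => ?_
      have := hx.1
      change 1 + x ≠ 0
      linarith
  -- `M_log(exp t) ≥ 2 log(1 + exp t) ≥ t`
  have hbt : t ≤ Mlog M (Real.exp t) := by
    have h2 := hM2 (Real.exp t) (Real.exp_pos t).le
    have h3 : 0 ≤ Real.log (1 + M (Real.exp t)) := Real.log_nonneg (by linarith)
    have h4 : t ≤ Real.log (1 + Real.exp t) := by
      rw [Real.le_log_iff_exp_le (by positivity)]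
      linarith
    unfold Mlog
    nlinarith
  obtain ⟨s, hs, hst⟩ := intermediate_value_Icc hb hc ⟨ht, hbt⟩
  exact ⟨s, hs.1, hst⟩

/-- The key growth estimate, with `m` in the role of `M(s)` and `γ > 1` depending only on
`α` and `β`. -/
lemma Mlog_rpow_le (α β : ℝ) (hα : 0 < α) (hβ : 1 < β) :
    ∃ γ K : ℝ, 1 < γ ∧ 0 ≤ K ∧ ∀ m s : ℝ, 2 ≤ m → 1 ≤ s →
      (m * (Real.log (1 + m) + Real.log (1 + s))) ^ γ ≤ K * (m ^ β * s ^ α) := by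
  obtain ⟨η, hη, hηα, hηβ⟩ : ∃ η : ℝ, 0 < η ∧ η ≤ α ∧ η ≤ (β - 1) / 2 :=
    ⟨min α ((β - 1) / 2), lt_min hα (by linarith), min_le_left _ _, min_le_right _ _⟩
  have hγ : 1 < β - η := by linarith
  have hγ0 : 0 < β - η := by linarith
  have hε : 0 < η / (β - η) := div_pos hη hγ0
  refine ⟨β - η, 4 ^ η / (η / (β - η)) ^ (β - η), hγ, by positivity, fun m s hm hs => ?_⟩
  have hm0 : 0 < m := by linarith
  have hs0 : 0 < s := by linarith
  have hlog : Real.log (1 + m) + Real.log (1 + s)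
      ≤ (4 * (m * s)) ^ (η / (β - η)) / (η / (β - η)) := by
    rw [← Real.log_mul (by positivity) (by positivity)]
    refine le_trans (Real.log_le_log (by positivity) ?_)
      (Real.log_le_rpow_div (by positivity) hε)
    nlinarith [mul_nonneg (sub_nonneg.2 hs) (by linarith : (0 : ℝ) ≤ m - 1)]
  have hl1 : 0 ≤ Real.log (1 + m) := Real.log_nonneg (by linarith)
  have hl2 : 0 ≤ Real.log (1 + s) := Real.log_nonneg (by linarith)
  calc (m * (Real.log (1 + m) + Real.log (1 + s))) ^ (β - η)
      ≤ (m * ((4 * (m * s)) ^ (η / (β - η)) / (η / (β - η)))) ^ (β - η) := by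
        gcongr
    _ = 4 ^ η / (η / (β - η)) ^ (β - η) * (m ^ β * s ^ η) := by
        have h1 : m ^ β = m ^ (β - η) * m ^ η := by
          rw [← Real.rpow_add hm0, sub_add_cancel]
        rw [Real.mul_rpow hm0.le (by positivity), Real.div_rpow (by positivity) hε.le,
          ← Real.rpow_mul (by positivity), div_mul_cancel₀ _ hγ0.ne',
          Real.mul_rpow (by norm_num) (by positivity), Real.mul_rpow hm0.le hs0.le, h1]
        ring
    _ ≤ _ := by
        gcongr

/-- For `R(t) = w_{M,log}(t)`, `α > 0` and `β > 1`, the integral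
`∫_0^∞ R(t)^{−α} M(R(t))^{−β} dt` is finite. -/
theorem statement_19
    (M : ℝ → ℝ) (hM2 : ∀ s : ℝ, 0 ≤ s → 2 ≤ M s)
    (hMcont : ContinuousOn M (Ici 0)) (hMmono : MonotoneOn M (Ici 0))
    (Minv : ℝ → ℝ)
    (hMinv₁ : ∀ s : ℝ, 0 ≤ s → Minv (Mlog M s) = s)
    (hMinv₂ : ∀ t : ℝ, Mlog M 0 ≤ t → Mlog M (Minv t) = t) :
    ∀ α β : ℝ, 0 < α → 1 < β →
      ∫⁻ t in Ici (0:ℝ),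
          ENNReal.ofReal
            (wMlog M Minv t ^ (-α) * M (wMlog M Minv t) ^ (-β)) < ⊤ := by
  intro α β hα hβ
  obtain ⟨γ, K, hγ, hK, hbound⟩ := Mlog_rpow_le α β hα hβ
  have hT := Mlog_one_pos M hM2
  rw [← Ico_union_Ici_eq_Ici hT.le]
  refine (lintegral_union_le _ _ _).trans_lt (ENNReal.add_lt_top.2 ⟨?_, ?_⟩)
  · rw [setLIntegral_congr_fun (g := fun _ => ENNReal.ofReal ((1 : ℝ) ^ (-α) * M 1 ^ (-β)))
      measurableSet_Ico (fun t ht => by simp only [wMlog, if_neg (not_le.2 ht.2)])]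
    rw [setLIntegral_const, Real.volume_Ico]
    exact ENNReal.mul_lt_top ENNReal.ofReal_lt_top ENNReal.ofReal_lt_top
  · have hint : IntegrableOn (fun t : ℝ => K * t ^ (-γ)) (Ici (Mlog M 1)) := by
      rw [integrableOn_Ici_iff_integrableOn_Ioi]
      exact (integrableOn_Ioi_rpow_of_lt (by linarith) hT).const_mul K
    refine lt_of_le_of_lt (setLIntegral_mono' measurableSet_Ici fun t ht => ?_)
      hint.lintegral_lt_top
    apply ENNReal.ofReal_le_ofReal
    have ht' : Mlog M 1 ≤ t := ht
    have ht0 : 0 < t := hT.trans_le ht'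
    obtain ⟨s, hs, hst⟩ := exists_Mlog_eq M hM2 hMcont t ht'
    have hs0 : 0 < s := by linarith
    have hm := hM2 s hs0.le
    have hm0 : 0 < M s := by linarith
    have hR : wMlog M Minv t = s := by
      rw [wMlog, if_pos ht', ← hst, hMinv₁ s hs0.le]
    have hb := hbound (M s) s hm hs
    change Mlog M s ^ γ ≤ _ at hb
    rw [hst] at hb
    rw [hR, Real.rpow_neg hs0.le, Real.rpow_neg hm0.le, Real.rpow_neg ht0.le, ← mul_inv,
      ← div_eq_mul_inv, le_div_iff₀ (by positivity), inv_mul_le_iff₀ (by positivity)]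
    linarith
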